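/- In R = ℂ[G] the following hold: (a) if r, r′ ∈ R satisfy (T − 1)²·r = S·(T − 1)²·r′, then r = 0 and r′ = 0; (b) if u, w ∈ R satisfy (T − 1)²·u = (S + 1)·w, then u = 0; (c) if u, w ∈ R satisfy (T − 1)²·u = (S − 1)·w, then u = 0. Consequently the sums defining the right ideals I = (T−1)²R + S(T−1)²R, I₊ = (S+1)R + (T−1)²R, and I₋ = (S−1)R + (T−1)²R are direct. -/

import Mathlib

open scoped MatrixGroups

/-- `PSL₂(ℤ)`: the quotient of `SL₂(ℤ)` by its center `{±I}`. -/
abbrev PSL2Z : Type :=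
  Matrix.SpecialLinearGroup (Fin 2) ℤ ⧸ Subgroup.center (Matrix.SpecialLinearGroup (Fin 2) ℤ)

/-- The image of `T = [[1,1],[0,1]]` in `PSL₂(ℤ)`. -/
def Tg : PSL2Z := QuotientGroup.mk ModularGroup.T

/-- The image of `S = [[0,-1],[1,0]]` in `PSL₂(ℤ)`. -/
def Sg : PSL2Z := QuotientGroup.mk ModularGroup.S

/-- The element `x = S` of `PSL₂(ℤ)`. -/
def xg : PSL2Z := Sg

/-- The element `y = S·T` of `PSL₂(ℤ)`. -/
def yg : PSL2Z := Sg * Tg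

/-- The embedding of the group `PSL₂(ℤ)` into its complex group algebra. -/
noncomputable def ofG : PSL2Z → MonoidAlgebra ℂ PSL2Z := MonoidAlgebra.of ℂ PSL2Z

/-- Squared norm of the row `i` on `SL₂(ℤ)`. -/
def rowSL (i : Fin 2) (A : Matrix.SpecialLinearGroup (Fin 2) ℤ) : ℤ := A.1 i 0 ^ 2 + A.1 i 1 ^ 2

lemma mk_eq_cases (A B : Matrix.SpecialLinearGroup (Fin 2) ℤ)
    (h : (QuotientGroup.mk A : PSL2Z) = QuotientGroup.mk B) :
    ∃ r : ℤ, r ^ 2 = 1 ∧ ∀ i j, B.1 i j = A.1 i j * r := by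
  rw [QuotientGroup.eq, Matrix.SpecialLinearGroup.mem_center_iff] at h
  obtain ⟨r, hr, h⟩ := h
  refine ⟨r, by simpa using hr, fun i j => ?_⟩
  have hB : B = A * (A⁻¹ * B) := by group
  have : B.1 = A.1 * (Matrix.scalar (Fin 2) r) := by
    rw [h, ← Matrix.SpecialLinearGroup.coe_mul, ← hB]
  rw [this]
  rw [Matrix.scalar_apply, Matrix.mul_diagonal]

/-- Squared norm of a row, on `PSL₂(ℤ)`. -/
noncomputable def rowN (i : Fin 2) (g : PSL2Z) : ℤ := rowSL i g.out

lemma rowN_mk (i : Fin 2) (A : Matrix.SpecialLinearGroup (Fin 2) ℤ) :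
    rowN i (QuotientGroup.mk A : PSL2Z) = rowSL i A := by
  have h : (QuotientGroup.mk (QuotientGroup.mk A : PSL2Z).out : PSL2Z) = QuotientGroup.mk A :=
    QuotientGroup.out_eq' _
  obtain ⟨r, hr, h⟩ := mk_eq_cases _ _ h
  unfold rowN rowSL
  rw [h, h]
  linear_combination (-(((QuotientGroup.mk A : PSL2Z).out).1 i 0 ^ 2
    + ((QuotientGroup.mk A : PSL2Z).out).1 i 1 ^ 2)) * hr

lemma rowN_S (g : PSL2Z) : rowN 0 (Sg * g) = rowN 1 g ∧ rowN 1 (Sg * g) = rowN 0 g := by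
  induction g using QuotientGroup.induction_on with
  | H A =>
    have : Sg * (QuotientGroup.mk A : PSL2Z) = QuotientGroup.mk (ModularGroup.S * A) := rfl
    rw [this, rowN_mk, rowN_mk, rowN_mk, rowN_mk]
    simp [rowSL, Matrix.SpecialLinearGroup.coe_mul, ModularGroup.coe_S, Matrix.mul_apply, Fin.sum_univ_two]

lemma S_mul_S : Sg * Sg = 1 := by
  have : Sg * Sg = (QuotientGroup.mk (ModularGroup.S * ModularGroup.S) : PSL2Z) := rfl
  rw [this, QuotientGroup.eq_one_iff, Matrix.SpecialLinearGroup.mem_center_iff]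
  refine ⟨-1, by simp, ?_⟩
  ext i j
  fin_cases i <;> fin_cases j <;>
    simp [Matrix.SpecialLinearGroup.coe_mul, ModularGroup.coe_S, Matrix.mul_apply, Fin.sum_univ_two, Matrix.scalar_apply]

lemma Tpow_mk (k : ℤ) (A : Matrix.SpecialLinearGroup (Fin 2) ℤ) :
    Tg ^ k * (QuotientGroup.mk A : PSL2Z) = QuotientGroup.mk (ModularGroup.T ^ k * A) := rfl

lemma Tpow_entries (k : ℤ) (A : Matrix.SpecialLinearGroup (Fin 2) ℤ) (j : Fin 2) :
    (ModularGroup.T ^ k * A).1 0 j = A.1 0 j + k * A.1 1 j ∧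
    (ModularGroup.T ^ k * A).1 1 j = A.1 1 j := by
  have : (ModularGroup.T ^ k * A).1 = (ModularGroup.T ^ k).1 * A.1 := rfl
  rw [this, ModularGroup.coe_T_zpow]
  simp [Matrix.mul_apply, Fin.sum_univ_two]

lemma Tpow_inj (k : ℤ) (h : Tg ^ k = 1) : k = 0 := by
  have h2 : (QuotientGroup.mk (1 : Matrix.SpecialLinearGroup (Fin 2) ℤ) : PSL2Z)
      = QuotientGroup.mk (ModularGroup.T ^ k) := h.symm
  obtain ⟨r, hr, h3⟩ := mk_eq_cases _ _ h2
  have := h3 0 1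
  rw [ModularGroup.coe_T_zpow] at this
  simpa using this

lemma rowN_T_one (k : ℤ) (g : PSL2Z) : rowN 1 (Tg ^ k * g) = rowN 1 g := by
  induction g using QuotientGroup.induction_on with
  | H A =>
    rw [Tpow_mk, rowN_mk, rowN_mk]
    unfold rowSL
    rw [(Tpow_entries k A 0).2, (Tpow_entries k A 1).2]

/-- Two points at distance at least two on a `T`-line cannot both have short top row. -/
lemma geom (g : PSL2Z) (k m : ℤ) (hkm : k + 2 ≤ m)
    (h1 : rowN 0 (Tg ^ k * g) ≤ rowN 1 g) (h2 : rowN 0 (Tg ^ m * g) ≤ rowN 1 g) : False := by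
  induction g using QuotientGroup.induction_on with
  | H A =>
    rw [Tpow_mk, rowN_mk, rowN_mk] at h1 h2
    unfold rowSL at h1 h2
    rw [(Tpow_entries _ A 0).1, (Tpow_entries _ A 1).1] at h1 h2
    have hd := A.2
    rw [Matrix.det_fin_two] at hd
    generalize A.1 0 0 = a at *
    generalize A.1 0 1 = b at *
    generalize A.1 1 0 = c at *
    generalize A.1 1 1 = d at *
    have hn : (m - k) ^ 2 ≥ 4 := by nlinarith
    have hz : (2 * a + (k + m) * c) ^ 2 + (2 * b + (k + m) * d) ^ 2 ≤ 0 := by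
      nlinarith [mul_nonneg (sub_nonneg.2 hn) (add_nonneg (sq_nonneg c) (sq_nonneg d))]
    have e1 : 2 * a + (k + m) * c = 0 := by
      have := sq_nonneg (2 * b + (k + m) * d)
      exact pow_eq_zero_iff (two_ne_zero) |>.1 (le_antisymm (by linarith) (sq_nonneg _))
    have e2 : 2 * b + (k + m) * d = 0 := by
      have := sq_nonneg (2 * a + (k + m) * c)
      exact pow_eq_zero_iff (two_ne_zero) |>.1 (le_antisymm (by linarith) (sq_nonneg _))
    have : (2 : ℤ) = 0 := by linear_combination (-2) * hd + d * e1 - c * e2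
    omega

lemma ofG_mul_apply (x g : PSL2Z) (r : MonoidAlgebra ℂ PSL2Z) :
    (ofG x * r).coeff g = r.coeff (x⁻¹ * g) := by
  unfold ofG
  rw [MonoidAlgebra.of_apply, MonoidAlgebra.coeff_single_mul_apply, one_mul]

lemma p_apply (r : MonoidAlgebra ℂ PSL2Z) (g : PSL2Z) :
    ((ofG Tg - 1) ^ 2 * r).coeff g
      = r.coeff (Tg ^ (-2 : ℤ) * g) - 2 * r.coeff (Tg ^ (-1 : ℤ) * g) + r.coeff g := by
  have : (ofG Tg - 1) ^ 2 * r = ofG Tg * (ofG Tg * r) - ofG Tg * r - ofG Tg * r + r := by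
    noncomm_ring
  rw [this]
  have e : ∀ a b c d : MonoidAlgebra ℂ PSL2Z, (a - b - c + d).coeff g = a.coeff g - b.coeff g - c.coeff g + d.coeff g :=
    fun a b c d => rfl
  rw [e, ofG_mul_apply, ofG_mul_apply, ofG_mul_apply]
  have : Tg ^ (-2 : ℤ) * g = Tg⁻¹ * (Tg⁻¹ * g) := by group
  rw [this, zpow_neg_one]
  ring

lemma line (r : MonoidAlgebra ℂ PSL2Z) (g : PSL2Z) (hg : r.coeff g ≠ 0) :
    ∃ k m : ℤ, k + 2 ≤ m ∧ ((ofG Tg - 1) ^ 2 * r).coeff (Tg ^ k * g) ≠ 0 ∧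
      ((ofG Tg - 1) ^ 2 * r).coeff (Tg ^ m * g) ≠ 0 := by
  have inj : Function.Injective (fun k : ℤ => Tg ^ k * g) := by
    intro a b h
    have h1 : Tg ^ a = Tg ^ b := mul_right_cancel h
    have := Tpow_inj (a - b) (by rw [zpow_sub, h1, mul_inv_cancel])
    omega
  have fin : {k : ℤ | r.coeff (Tg ^ k * g) ≠ 0}.Finite := by
    have : {x : PSL2Z | r.coeff x ≠ 0}.Finite := Finsupp.hasFiniteSupport r.coeff
    exact this.preimage inj.injOn
  have ne : {k : ℤ | r.coeff (Tg ^ k * g) ≠ 0}.Nonempty := ⟨0, by simpa using hg⟩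
  obtain ⟨k, hk, hk2⟩ := Set.exists_min_image _ id fin ne
  obtain ⟨m, hm, hm2⟩ := Set.exists_max_image _ id fin ne
  have lo : ∀ j, j < k → r.coeff (Tg ^ j * g) = 0 := by
    intro j hj
    by_contra h
    have := hk2 j h
    simp at this
    omega
  have hi : ∀ j, m < j → r.coeff (Tg ^ j * g) = 0 := by
    intro j hj
    by_contra h
    have := hm2 j h
    simp at this
    omega
  have hkm : k ≤ m := hk2 m hm
  refine ⟨k, m + 2, by omega, ?_, ?_⟩
  · rw [p_apply, ← mul_assoc, ← mul_assoc, ← zpow_add, ← zpow_add, lo _ (by omega),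
      lo _ (by omega)]
    simpa using hk
  · rw [p_apply, ← mul_assoc, ← mul_assoc, ← zpow_add, ← zpow_add, hi (-1 + (m + 2)) (by omega),
      hi (m + 2) (by omega)]
    have : -2 + (m + 2) = m := by ring
    rw [this]
    simpa using hm

lemma line' (r : MonoidAlgebra ℂ PSL2Z) (g : PSL2Z) (hg : ((ofG Tg - 1) ^ 2 * r).coeff g ≠ 0) :
    ∃ k m : ℤ, k + 2 ≤ m ∧ ((ofG Tg - 1) ^ 2 * r).coeff (Tg ^ k * g) ≠ 0 ∧
      ((ofG Tg - 1) ^ 2 * r).coeff (Tg ^ m * g) ≠ 0 := by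
  have : ∃ j : ℤ, r.coeff (Tg ^ j * g) ≠ 0 := by
    by_contra! h
    apply hg
    rw [p_apply, h, h]
    simpa using h 0
  obtain ⟨j, hj⟩ := this
  obtain ⟨k, m, h, h1, h2⟩ := line r _ hj
  refine ⟨k + j, m + j, by omega, ?_, ?_⟩
  · rwa [zpow_add, mul_assoc]
  · rwa [zpow_add, mul_assoc]

lemma no_max (r : MonoidAlgebra ℂ PSL2Z) (g : PSL2Z) (hg : ((ofG Tg - 1) ^ 2 * r).coeff g ≠ 0)
    (hmax : ∀ h, ((ofG Tg - 1) ^ 2 * r).coeff h ≠ 0 → rowN 0 h ≤ rowN 1 g) : False := by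
  obtain ⟨k, m, h, h1, h2⟩ := line' r g hg
  exact geom g k m h (hmax _ h1) (hmax _ h2)

lemma p_inj (r : MonoidAlgebra ℂ PSL2Z) (h : (ofG Tg - 1) ^ 2 * r = 0) : r = 0 := by
  by_contra hr
  have : ∃ g, r.coeff g ≠ 0 := by
    by_contra! h'
    exact hr (MonoidAlgebra.ext (Finsupp.ext h'))
  obtain ⟨g, hg⟩ := this
  obtain ⟨k, m, -, h1, -⟩ := line r g hg
  rw [h] at h1
  exact h1 rfl

lemma ofS_sq : ofG Sg * ofG Sg = 1 := by
  unfold ofG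
  rw [← map_mul, S_mul_S, map_one]

lemma part_a (r r' : MonoidAlgebra ℂ PSL2Z)
    (h : (ofG Tg - 1) ^ 2 * r = ofG Sg * (ofG Tg - 1) ^ 2 * r') : r = 0 ∧ r' = 0 := by
  have hS : Sg⁻¹ = Sg := inv_eq_of_mul_eq_one_right S_mul_S
  have key : ∀ g, ((ofG Tg - 1) ^ 2 * r).coeff g = ((ofG Tg - 1) ^ 2 * r').coeff (Sg * g) := by
    intro g
    rw [h, mul_assoc, ofG_mul_apply, hS]
  have hz : (ofG Tg - 1) ^ 2 * r = 0 := by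
    by_contra hne
    have ne : {x : PSL2Z | ((ofG Tg - 1) ^ 2 * r).coeff x ≠ 0}.Nonempty := by
      by_contra hh
      rw [Set.not_nonempty_iff_eq_empty] at hh
      refine hne (MonoidAlgebra.ext (Finsupp.ext fun x => ?_))
      by_contra hx
      have : x ∈ {x : PSL2Z | ((ofG Tg - 1) ^ 2 * r).coeff x ≠ 0} := hx
      rw [hh] at this
      exact this
    have fin : {x : PSL2Z | ((ofG Tg - 1) ^ 2 * r).coeff x ≠ 0}.Finite := by
      have := Finsupp.hasFiniteSupport ((ofG Tg - 1) ^ 2 * r).coeff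
      exact this
    obtain ⟨g, hg, hmax⟩ :=
      Set.exists_max_image _ (fun x => max (rowN 0 x) (rowN 1 x)) fin ne
    rcases le_total (rowN 0 g) (rowN 1 g) with hle | hle
    · refine no_max r g hg fun x hx => ?_
      have := hmax x hx
      simp only [max_eq_right hle] at this
      exact (le_max_left _ _).trans this
    · refine no_max r' (Sg * g) (by rw [← key]; exact hg) fun x hx => ?_
      have hx' : ((ofG Tg - 1) ^ 2 * r).coeff (Sg * x) ≠ 0 := by
        rw [key, ← mul_assoc, S_mul_S, one_mul]
        exact hx
      have := hmax _ hx'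
      simp only [max_eq_left hle] at this
      rw [(rowN_S g).2, ← (rowN_S x).2]
      exact (le_max_right _ _).trans this
  refine ⟨p_inj r hz, p_inj r' ?_⟩
  rw [hz] at h
  have := congrArg (fun z => ofG Sg * z) h
  simp only [mul_zero] at this
  rw [← mul_assoc, ← mul_assoc, ofS_sq, one_mul] at this
  exact this.symm

/-- The sums defining the right ideals `𝓘 = (T-1)²R + S(T-1)²R`, `𝓘₊ = (S+1)R + (T-1)²R`,
and `𝓘₋ = (S-1)R + (T-1)²R` of `R = ℂ[PSL₂(ℤ)]` are direct: (a) `(T-1)²r = S(T-1)²r'` forces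
`r = r' = 0`; (b) `(T-1)²u = (S+1)w` forces `u = 0`; (c) `(T-1)²u = (S-1)w` forces `u = 0`. -/
theorem free_ideals :
    (∀ r r' : MonoidAlgebra ℂ PSL2Z,
      (ofG Tg - 1) ^ 2 * r = ofG Sg * (ofG Tg - 1) ^ 2 * r' → r = 0 ∧ r' = 0) ∧
    (∀ u w : MonoidAlgebra ℂ PSL2Z,
      (ofG Tg - 1) ^ 2 * u = (ofG Sg + 1) * w → u = 0) ∧
    (∀ u w : MonoidAlgebra ℂ PSL2Z,
      (ofG Tg - 1) ^ 2 * u = (ofG Sg - 1) * w → u = 0) := by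
  refine ⟨part_a, fun u w h => ?_, fun u w h => ?_⟩
  · refine (part_a u u ?_).1
    rw [mul_assoc, h, ← mul_assoc, mul_add, ofS_sq, mul_one, add_comm]
  · refine (part_a u (-u) ?_).1
    rw [mul_assoc, mul_neg, h, mul_neg, ← mul_assoc, mul_sub, ofS_sq, mul_one, ← neg_mul, neg_sub]
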